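/- For all constants 0 < δ ≤ Δ there exists C > 0 such that: for every integer k ≥ 3 and every Alice value density v_A there is a deterministic Alice strategy for the repeated k-cut game with the property that for every Bob value density v_B and every horizon T ≥ 2, Alice's Stackelberg regret against the myopic Bob over horizon T is at most C·√(T·k)·log(T·k). -/

import Mathlib

open MeasureTheory Set

noncomputable section

attribute [local instance] Classical.propDecidable

/-- A value density: measurable, bounded in `[δ, Δ]` on `[0,1]`, integrating to 1 on `[0,1]`. -/
def IsValueDensity (δ Δ : ℝ) (v : ℝ → ℝ) : Prop :=
  Measurable v ∧ (∀ x ∈ Set.Icc (0:ℝ) 1, v x ∈ Set.Icc δ Δ) ∧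
    (∫ x in Set.Icc (0:ℝ) 1, v x) = 1

/-- The value of a piece `S` under density `v`. -/
def pieceVal (v : ℝ → ℝ) (S : Set ℝ) : ℝ := ∫ x in S, v x

/-- Extended cut points: `0, c 0, …, c (k-1), 1`. -/
def extCuts (k : ℕ) (c : Fin k → ℝ) : ℕ → ℝ := fun i =>
  if i = 0 then 0 else if h : i - 1 < k then c ⟨i - 1, h⟩ else 1

/-- A valid vector of `k` cut points: nondecreasing, within `[0,1]`. -/
def ValidCuts (k : ℕ) (c : Fin k → ℝ) : Prop :=
  Monotone c ∧ ∀ i, c i ∈ Set.Icc (0:ℝ) 1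

/-- The two pieces of the alternating partition induced by cuts `c`:
`true` gives the union of even-indexed intervals, `false` the odd-indexed ones. -/
def altPiece (k : ℕ) (c : Fin k → ℝ) (b : Bool) : Set ℝ :=
  ⋃ i ∈ Finset.range (k + 1),
    if decide (i % 2 = 0) = b then Set.Icc (extCuts k c i) (extCuts k c (i + 1)) else ∅

/-- Alice's Stackelberg value with `k` cuts: max of `V_A(Z_A)` over alternating partitions
`(Z_A, Z_B)` induced by `k` cut points with `V_B(Z_B) ≥ 1/2`. -/
def stackelbergValue (k : ℕ) (vA vB : ℝ → ℝ) : ℝ :=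
  sSup { u : ℝ | ∃ (c : Fin k → ℝ) (b : Bool), ValidCuts k c ∧
    1 / 2 ≤ pieceVal vB (altPiece k c (!b)) ∧ u = pieceVal vA (altPiece k c b) }

/-- A history of play: the list of (Alice's cuts, Bob's choice) in past rounds. -/
abbrev Hist (k : ℕ) := List ((Fin k → ℝ) × Bool)

/-- Alice's deterministic strategy: horizon and history ↦ next cut vector. -/
abbrev AliceStrategy (k : ℕ) := ℕ → Hist k → (Fin k → ℝ)

/-- Bob's deterministic strategy: horizon, history, and Alice's current cuts ↦ choice. -/
abbrev BobStrategy (k : ℕ) := ℕ → Hist k → (Fin k → ℝ) → Bool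

/-- The history of play after `t` rounds. -/
def playHist (k : ℕ) (SA : AliceStrategy k) (SB : BobStrategy k) (T : ℕ) : ℕ → Hist k
  | 0 => []
  | t + 1 =>
      let h := playHist k SA SB T t
      let cuts := SA T h
      h ++ [(cuts, SB T h cuts)]

/-- Alice's cuts in round `t` (0-indexed). -/
def roundCuts (k : ℕ) (SA : AliceStrategy k) (SB : BobStrategy k) (T t : ℕ) : Fin k → ℝ :=
  SA T (playHist k SA SB T t)

/-- Bob's choice in round `t` (0-indexed). -/
def roundChoice (k : ℕ) (SA : AliceStrategy k) (SB : BobStrategy k) (T t : ℕ) : Bool :=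
  SB T (playHist k SA SB T t) (roundCuts k SA SB T t)

/-- Alice's Stackelberg regret over horizon `T`: in each round she receives the value of
the piece Bob did not choose. -/
def aliceRegret (k : ℕ) (vA vB : ℝ → ℝ) (SA : AliceStrategy k) (SB : BobStrategy k)
    (T : ℕ) : ℝ :=
  ∑ t ∈ Finset.range T,
    (stackelbergValue k vA vB -
      pieceVal vA (altPiece k (roundCuts k SA SB T t) (!(roundChoice k SA SB T t))))

/-- Bob's regret over horizon `T` relative to always choosing his preferred piece. -/
def bobRegret (k : ℕ) (vB : ℝ → ℝ) (SA : AliceStrategy k) (SB : BobStrategy k) (T : ℕ) : ℝ :=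
  ∑ t ∈ Finset.range T,
    (max (pieceVal vB (altPiece k (roundCuts k SA SB T t) true))
        (pieceVal vB (altPiece k (roundCuts k SA SB T t) false)) -
      pieceVal vB (altPiece k (roundCuts k SA SB T t) (roundChoice k SA SB T t)))

/-- Bob's strategy guarantees regret at most `R T` against every Alice strategy and horizon. -/
def BobGuarantees (k : ℕ) (vB : ℝ → ℝ) (SB : BobStrategy k) (R : ℕ → ℝ) : Prop :=
  ∀ (SA : AliceStrategy k) (T : ℕ), bobRegret k vB SA SB T ≤ R T

/-- The myopic Bob: chooses the piece of larger `V_B`-value, breaking ties towards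
the piece of smaller `V_A`-value. -/
def myopicBob (k : ℕ) (vA vB : ℝ → ℝ) : BobStrategy k := fun _ _ c =>
  if pieceVal vB (altPiece k c false) < pieceVal vB (altPiece k c true) then true
  else if pieceVal vB (altPiece k c true) < pieceVal vB (altPiece k c false) then false
  else if pieceVal vA (altPiece k c true) ≤ pieceVal vA (altPiece k c false) then true
  else false

/-- Alice's strategy always produces valid cut vectors. -/
def AliceValid (k : ℕ) (SA : AliceStrategy k) : Prop := ∀ T h, ValidCuts k (SA T h)

/-! ### Cumulative values -/

/-- Cumulative value of the density `v`. -/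
def cumVal (v : ℝ → ℝ) (x : ℝ) : ℝ := ∫ t in (0:ℝ)..x, v t

/-- The properties of cumulative value functions that are used. -/
structure IsCum (δ Δ : ℝ) (F : ℝ → ℝ) : Prop where
  zero : F 0 = 0
  one : F 1 = 1
  lower : ∀ x y, 0 ≤ x → x ≤ y → y ≤ 1 → δ * (y - x) ≤ F y - F x
  upper : ∀ x y, 0 ≤ x → x ≤ y → y ≤ 1 → F y - F x ≤ Δ * (y - x)

theorem density_integrableOn {δ Δ : ℝ} (hδ : 0 < δ) {v : ℝ → ℝ} (hv : IsValueDensity δ Δ v) :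
    IntegrableOn v (Icc 0 1) := by
  refine Measure.integrableOn_of_bounded (M := Δ) (by simp) hv.1.aestronglyMeasurable ?_
  refine (ae_restrict_iff' measurableSet_Icc).2 (Filter.Eventually.of_forall fun x hx => ?_)
  have := hv.2.1 x hx
  rw [Real.norm_eq_abs, abs_of_nonneg (hδ.le.trans this.1)]
  exact this.2

theorem density_intervalIntegrable {δ Δ : ℝ} (hδ : 0 < δ) {v : ℝ → ℝ}
    (hv : IsValueDensity δ Δ v) {x y : ℝ} (hx : x ∈ Icc (0:ℝ) 1) (hy : y ∈ Icc (0:ℝ) 1) :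
    IntervalIntegrable v volume x y := by
  rw [intervalIntegrable_iff']
  refine (density_integrableOn hδ hv).mono_set ?_
  exact Set.uIcc_subset_Icc hx hy

theorem cumVal_sub {δ Δ : ℝ} (hδ : 0 < δ) {v : ℝ → ℝ}
    (hv : IsValueDensity δ Δ v) {x y : ℝ} (hx : 0 ≤ x) (hxy : x ≤ y) (hy : y ≤ 1) :
    cumVal v y - cumVal v x = ∫ t in Icc x y, v t := by
  unfold cumVal
  rw [intervalIntegral.integral_interval_sub_left
    (density_intervalIntegrable hδ hv (by simp) ⟨hx.trans hxy, hy⟩)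
    (density_intervalIntegrable hδ hv (by simp) ⟨hx, hxy.trans hy⟩),
    intervalIntegral.integral_of_le hxy, integral_Icc_eq_integral_Ioc]

theorem cumVal_isCum {δ Δ : ℝ} (hδ : 0 < δ) {v : ℝ → ℝ} (hv : IsValueDensity δ Δ v) :
    IsCum δ Δ (cumVal v) where
  zero := by simp [cumVal]
  one := by
    have := cumVal_sub hδ hv le_rfl zero_le_one le_rfl
    rw [hv.2.2] at this
    simpa [cumVal] using this
  lower x y hx hxy hy := by
    rw [cumVal_sub hδ hv hx hxy hy]
    have hsub : Icc x y ⊆ Icc (0:ℝ) 1 := Icc_subset_Icc hx hy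
    have := setIntegral_mono_on (μ := volume) (f := fun _ => δ) (g := v) (s := Icc x y)
      (by simp) ((density_integrableOn hδ hv).mono_set hsub) measurableSet_Icc
      (fun t ht => (hv.2.1 t (hsub ht)).1)
    simp [hxy] at this
    linarith
  upper x y hx hxy hy := by
    rw [cumVal_sub hδ hv hx hxy hy]
    have hsub : Icc x y ⊆ Icc (0:ℝ) 1 := Icc_subset_Icc hx hy
    have := setIntegral_mono_on (μ := volume) (f := v) (g := fun _ => Δ) (s := Icc x y)
      ((density_integrableOn hδ hv).mono_set hsub) (by simp) measurableSet_Icc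
      (fun t ht => (hv.2.1 t (hsub ht)).2)
    simp [hxy] at this
    linarith

/-! ### Extended cuts -/

theorem extCuts_zero (k : ℕ) (c : Fin k → ℝ) : extCuts k c 0 = 0 := by simp [extCuts]

theorem extCuts_last (k : ℕ) (c : Fin k → ℝ) : extCuts k c (k + 1) = 1 := by simp [extCuts]

theorem extCuts_mem {k : ℕ} {c : Fin k → ℝ} (hc : ValidCuts k c) (i : ℕ) :
    extCuts k c i ∈ Icc (0:ℝ) 1 := by
  unfold extCuts
  split_ifs with h h'
  · simp
  · exact hc.2 _
  · simp

theorem extCuts_mono {k : ℕ} {c : Fin k → ℝ} (hc : ValidCuts k c) : Monotone (extCuts k c) := by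
  refine monotone_nat_of_le_succ fun i => ?_
  by_cases h0 : i = 0
  · subst h0
    rw [extCuts_zero]
    exact (extCuts_mem hc _).1
  by_cases h1 : i < k
  · have h2 : i - 1 < k := by omega
    simp only [extCuts, h0, h2, h1, if_false, dif_pos, Nat.add_sub_cancel,
      Nat.add_eq_zero_iff, one_ne_zero, and_false]
    exact hc.1 (by simp [Fin.le_def])
  · have : extCuts k c (i + 1) = 1 := by simp [extCuts, h1]
    rw [this]
    exact (extCuts_mem hc _).2

/-- Value of an alternating piece in terms of the cumulative value. -/
def altSum (k : ℕ) (F : ℝ → ℝ) (X : ℕ → ℝ) (b : Bool) : ℝ :=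
  ∑ i ∈ Finset.range (k + 1), if decide (i % 2 = 0) = b then F (X (i + 1)) - F (X i) else 0

theorem pieceVal_eq {δ Δ : ℝ} (hδ : 0 < δ) {v : ℝ → ℝ} (hv : IsValueDensity δ Δ v) {k : ℕ}
    {c : Fin k → ℝ} (hc : ValidCuts k c) (b : Bool) :
    pieceVal v (altPiece k c b) = altSum k (cumVal v) (extCuts k c) b := by
  have hmono := extCuts_mono hc
  have hmem := extCuts_mem hc
  set X := extCuts k c with hX
  have key : ∀ n, IntegrableOn v (⋃ i ∈ Finset.range n,
      if decide (i % 2 = 0) = b then Icc (X i) (X (i + 1)) else ∅) ∧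
      (⋃ i ∈ Finset.range n,
        if decide (i % 2 = 0) = b then Icc (X i) (X (i + 1)) else ∅) ⊆ Icc 0 (X n) ∧
      (∫ x in (⋃ i ∈ Finset.range n,
        if decide (i % 2 = 0) = b then Icc (X i) (X (i + 1)) else ∅), v x) =
      ∑ i ∈ Finset.range n,
        if decide (i % 2 = 0) = b then cumVal v (X (i + 1)) - cumVal v (X i) else 0 := by
    intro n
    induction n with
    | zero => simp
    | succ n ih =>
      obtain ⟨h1, h2, h3⟩ := ih
      rw [Finset.sum_range_succ, ← h3, Finset.range_add_one, Finset.set_biUnion_insert]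
      split_ifs with hb
      · have hInt0 : IntegrableOn v (Icc (X n) (X (n + 1))) :=
          (density_integrableOn hδ hv).mono_set (Icc_subset_Icc (hmem n).1 (hmem (n+1)).2)
        refine ⟨hInt0.union h1, ?_, ?_⟩
        · refine union_subset (Icc_subset_Icc_left (hmem n).1) (h2.trans ?_)
          exact Icc_subset_Icc_right (hmono (Nat.le_succ n))
        · rw [union_comm, setIntegral_union₀ ?_ measurableSet_Icc.nullMeasurableSet h1 hInt0,
            cumVal_sub hδ hv (hmem n).1 (hmono (Nat.le_succ n)) (hmem (n+1)).2]
          refine measure_mono_null (t := {X n}) ?_ (by simp)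
          rintro x ⟨hx1, hx2⟩
          exact le_antisymm (h2 hx1).2 hx2.1
      · simp only [empty_union, add_zero]
        exact ⟨h1, h2.trans (Icc_subset_Icc_right (hmono (Nat.le_succ n))), trivial⟩
  exact (key (k + 1)).2.2

theorem altSum_add (k : ℕ) (F : ℝ → ℝ) (X : ℕ → ℝ) (b : Bool) :
    altSum k F X b + altSum k F X (!b) = F (X (k + 1)) - F (X 0) := by
  rw [← Finset.sum_range_sub (fun i => F (X i)), altSum, altSum, ← Finset.sum_add_distrib]
  refine Finset.sum_congr rfl fun i _ => ?_
  cases b <;> cases h : decide (i % 2 = 0) <;> simp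

theorem pieceVal_add {δ Δ : ℝ} (hδ : 0 < δ) {v : ℝ → ℝ} (hv : IsValueDensity δ Δ v) {k : ℕ}
    {c : Fin k → ℝ} (hc : ValidCuts k c) (b : Bool) :
    pieceVal v (altPiece k c b) + pieceVal v (altPiece k c (!b)) = 1 := by
  rw [pieceVal_eq hδ hv hc, pieceVal_eq hδ hv hc, altSum_add, extCuts_zero, extCuts_last,
    (cumVal_isCum hδ hv).zero, (cumVal_isCum hδ hv).one, sub_zero]

theorem IsCum.mono {δ Δ : ℝ} {F : ℝ → ℝ} (hF : IsCum δ Δ F) (hδ : 0 < δ) {x y : ℝ}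
    (hx : 0 ≤ x) (hxy : x ≤ y) (hy : y ≤ 1) : F x ≤ F y := by
  have := hF.lower x y hx hxy hy
  have : 0 ≤ δ * (y - x) := mul_nonneg hδ.le (by linarith)
  linarith

theorem pieceVal_nonneg {δ Δ : ℝ} (hδ : 0 < δ) {v : ℝ → ℝ} (hv : IsValueDensity δ Δ v) {k : ℕ}
    {c : Fin k → ℝ} (hc : ValidCuts k c) (b : Bool) :
    0 ≤ pieceVal v (altPiece k c b) := by
  rw [pieceVal_eq hδ hv hc]
  refine Finset.sum_nonneg fun i _ => ?_
  split_ifs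
  · have := (cumVal_isCum hδ hv).mono hδ (extCuts_mem hc i).1 (extCuts_mono hc (Nat.le_succ i))
      (extCuts_mem hc (i+1)).2
    simpa using this
  · exact le_rfl

theorem pieceVal_le_one {δ Δ : ℝ} (hδ : 0 < δ) {v : ℝ → ℝ} (hv : IsValueDensity δ Δ v) {k : ℕ}
    {c : Fin k → ℝ} (hc : ValidCuts k c) (b : Bool) :
    pieceVal v (altPiece k c b) ≤ 1 := by
  have := pieceVal_add hδ hv hc b
  have := pieceVal_nonneg hδ hv hc (!b)
  linarith

/-! ### Perturbation and contraction -/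

theorem pieceVal_close {δ Δ : ℝ} (hδ : 0 < δ) {v w : ℝ → ℝ} (hv : IsValueDensity δ Δ v)
    (hw : IsValueDensity δ Δ w) {k : ℕ} {c : Fin k → ℝ} (hc : ValidCuts k c) (b : Bool) {κ : ℝ}
    (hκ : ∀ x ∈ Icc (0:ℝ) 1, |cumVal v x - cumVal w x| ≤ κ) :
    pieceVal v (altPiece k c b) ≤ pieceVal w (altPiece k c b) + (k + 1) * (2 * κ) := by
  have hκ0 : 0 ≤ κ := (abs_nonneg _).trans (hκ 0 (by simp))
  rw [pieceVal_eq hδ hv hc, pieceVal_eq hδ hw hc, ← sub_le_iff_le_add', altSum, altSum,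
    ← Finset.sum_sub_distrib]
  refine (Finset.sum_le_card_nsmul _ _ (2 * κ) fun i _ => ?_).trans (by simp)
  split_ifs
  · have h1 := abs_le.1 (hκ _ (extCuts_mem hc i))
    have h2 := abs_le.1 (hκ _ (extCuts_mem hc (i + 1)))
    linarith [h1.1, h2.2]
  · linarith

/-- Contracting every interval of the piece `b` by the factor `1 - θ`. -/
def contract (k : ℕ) (c : Fin k → ℝ) (b : Bool) (θ : ℝ) : Fin k → ℝ := fun i =>
  if decide ((i.val + 1) % 2 = 0) = b then
    c i + θ * (extCuts k c (i.val + 2) - c i)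
  else if i.val = 0 then (1 - θ) * c i else c i

/-- Extended version of `contract`. -/
def contractX (X : ℕ → ℝ) (k : ℕ) (b : Bool) (θ : ℝ) : ℕ → ℝ := fun i =>
  if i = 0 then 0 else if k < i then 1 else
  if decide (i % 2 = 0) = b then X i + θ * (X (i + 1) - X i)
  else if i = 1 then (1 - θ) * X i else X i

theorem extCuts_contract (k : ℕ) (c : Fin k → ℝ) (b : Bool) (θ : ℝ) (i : ℕ) :
    extCuts k (contract k c b θ) i = contractX (extCuts k c) k b θ i := by
  rcases i with _ | i
  · simp [extCuts, contractX]
  · by_cases hi : i < k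
    · have h' : ¬ k < i + 1 := by omega
      simp [extCuts, contractX, contract, hi, h']
    · have h' : k < i + 1 := by omega
      simp [extCuts, contractX, hi, h']

theorem contractX_props {X : ℕ → ℝ} (hX : Monotone X) {k : ℕ} (hX0 : X 0 = 0)
    (hX1 : X (k + 1) = 1) (hk1 : 1 ≤ k) (b : Bool) {θ : ℝ} (h0 : 0 ≤ θ) (h1 : θ ≤ 1) :
    ∀ i ≤ k, (contractX X k b θ i ≤ contractX X k b θ (i + 1)) ∧
      (decide (i % 2 = 0) = b → X i ≤ contractX X k b θ i ∧
        contractX X k b θ (i + 1) ≤ X (i + 1) ∧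
        contractX X k b θ (i + 1) - contractX X k b θ i = (1 - θ) * (X (i + 1) - X i)) := by
  intro i hi
  have m0 := hX (Nat.zero_le i)
  have m1 := hX (Nat.le_succ i)
  have m2 := hX (Nat.le_succ (i + 1))
  simp only [Nat.succ_eq_add_one] at m1 m2
  have p1 : 0 ≤ θ * (X (i + 1) - X i) := mul_nonneg h0 (by linarith)
  have p1' : 0 ≤ (1 - θ) * (X (i + 1) - X i) := mul_nonneg (by linarith) (by linarith)
  have p2 : 0 ≤ θ * (X (i + 1 + 1) - X (i + 1)) := mul_nonneg h0 (by linarith)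
  have p3 : 0 ≤ (1 - θ) * X i := mul_nonneg (by linarith) (by linarith)
  have p4 : 0 ≤ θ * X i := mul_nonneg h0 (by linarith)
  have p5 : 0 ≤ (1 - θ) * X (i + 1) := mul_nonneg (by linarith) (by linarith)
  have hki : ¬ k < i := by omega
  have hpar : decide ((i + 1) % 2 = 0) = !decide (i % 2 = 0) := by
    rcases Nat.mod_two_eq_zero_or_one i with h | h <;> simp [h] <;> omega
  unfold contractX
  simp only [hpar, hki, Nat.add_eq_zero_iff, one_ne_zero, and_false, if_false]
  by_cases hk : k < i + 1
  · obtain rfl : i = k := by omega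
    simp only [hk, if_true]
    have hi0 : i ≠ 0 := by omega
    · rcases Bool.eq_false_or_eq_true (decide (i % 2 = 0)) with h | h <;> cases b <;>
        by_cases hi1 : i = 1 <;> simp [h, hi0, hi1] <;> (try subst hi1) <;>
        (try constructorm* _ ∧ _) <;> nlinarith
  · have hk' : i = 1 → ¬ k ≤ 1 := by omega
    by_cases hi0 : i = 0
    · subst hi0
      cases b <;> simp [hk, hX0] at * <;> (try constructorm* _ ∧ _) <;> nlinarith
    · rcases Bool.eq_false_or_eq_true (decide (i % 2 = 0)) with h | h <;> cases b <;>
        by_cases hi1 : i = 1 <;> simp [h, hi0, hi1, hk, hk'] <;> (try subst hi1) <;>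
        (try constructorm* _ ∧ _) <;> nlinarith

theorem contract_valid {k : ℕ} (hk : 1 ≤ k) {c : Fin k → ℝ} (hc : ValidCuts k c) (b : Bool)
    {θ : ℝ} (h0 : 0 ≤ θ) (h1 : θ ≤ 1) : ValidCuts k (contract k c b θ) := by
  have hp := contractX_props (extCuts_mono hc) (extCuts_zero k c) (extCuts_last k c) hk b h0 h1
  have hm : ∀ j, j ≤ k + 1 → ∀ i, i ≤ j →
      extCuts k (contract k c b θ) i ≤ extCuts k (contract k c b θ) j := by
    intro j
    induction j with
    | zero =>
      intro _ i hi
      rw [Nat.le_zero.1 hi]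
    | succ j ih =>
      intro hj i hi
      rcases Nat.lt_or_ge i (j + 1) with h | h
      · refine (ih (by omega) i (by omega)).trans ?_
        rw [extCuts_contract, extCuts_contract]
        exact (hp j (by omega)).1
      · rw [show i = j + 1 by omega]
  have hv : ∀ i : Fin k, extCuts k (contract k c b θ) (i.val + 1) = contract k c b θ i := by
    intro i
    simp [extCuts]
  refine ⟨fun i j hij => ?_, fun i => ⟨?_, ?_⟩⟩
  · rw [← hv, ← hv]
    exact hm _ (by omega) _ (by simpa using hij)
  · have := hm (i.val + 1) (by omega) 0 (by omega)
    rwa [extCuts_zero, hv] at this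
  · have := hm (k + 1) le_rfl (i.val + 1) (by omega)
    rwa [extCuts_last, hv] at this

/-- Total length of the piece `b`. -/
def altLen (k : ℕ) (c : Fin k → ℝ) (b : Bool) : ℝ := altSum k (fun x => x) (extCuts k c) b

theorem altLen_nonneg {k : ℕ} {c : Fin k → ℝ} (hc : ValidCuts k c) (b : Bool) :
    0 ≤ altLen k c b := by
  unfold altLen altSum
  refine Finset.sum_nonneg fun i _ => ?_
  split_ifs
  · have := extCuts_mono hc (Nat.le_succ i)
    simpa using this
  · exact le_rfl

theorem contract_value {δ Δ : ℝ} (hδ : 0 < δ) {v : ℝ → ℝ} (hv : IsValueDensity δ Δ v)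
    {k : ℕ} (hk : 1 ≤ k) {c : Fin k → ℝ} (hc : ValidCuts k c) (b : Bool)
    {θ : ℝ} (h0 : 0 ≤ θ) (h1 : θ ≤ 1) :
    pieceVal v (altPiece k (contract k c b θ) b) + δ * (θ * altLen k c b) ≤
      pieceVal v (altPiece k c b) ∧
    pieceVal v (altPiece k c b) ≤
      pieceVal v (altPiece k (contract k c b θ) b) + Δ * (θ * altLen k c b) := by
  have hc' := contract_valid hk hc b h0 h1
  have hp := contractX_props (extCuts_mono hc) (extCuts_zero k c) (extCuts_last k c) hk b h0 h1
  have hF := cumVal_isCum hδ hv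
  rw [pieceVal_eq hδ hv hc, pieceVal_eq hδ hv hc', altLen, altSum, altSum, altSum]
  have key : ∀ i ∈ Finset.range (k + 1), decide (i % 2 = 0) = b →
      ∃ p q r s : ℝ, extCuts k (contract k c b θ) i = q ∧
        extCuts k (contract k c b θ) (i+1) = r ∧ extCuts k c i = p ∧ extCuts k c (i + 1) = s ∧
        0 ≤ p ∧ p ≤ q ∧ q ≤ r ∧ r ≤ s ∧ s ≤ 1 ∧ r - q = (1 - θ) * (s - p) := by
    intro i hi hb
    obtain ⟨h1, h2⟩ := hp i (by simpa [Nat.lt_succ_iff] using hi)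
    obtain ⟨h2, h3, h4⟩ := h2 hb
    refine ⟨_, _, _, _, rfl, rfl, rfl, rfl, ?_⟩
    simp only [extCuts_contract]
    exact ⟨(extCuts_mem hc i).1, h2, h1, h3, (extCuts_mem hc _).2, h4⟩
  rw [Finset.mul_sum, Finset.mul_sum, Finset.mul_sum, ← Finset.sum_add_distrib,
    ← Finset.sum_add_distrib]
  constructor
  · refine Finset.sum_le_sum fun i hi => ?_
    split_ifs with hb
    · obtain ⟨p, q, r, s, e1, e2, e3, e4, g1, g2, g3, g4, g5, g6⟩ := key i hi hb
      rw [e1, e2, e3, e4]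
      have a1 := hF.lower p q g1 g2 (by linarith)
      have a2 := hF.lower r s (by linarith) g4 g5
      have : θ * (s - p) = (q - p) + (s - r) := by linarith
      rw [this]
      linarith
    · simp
  · refine Finset.sum_le_sum fun i hi => ?_
    split_ifs with hb
    · obtain ⟨p, q, r, s, e1, e2, e3, e4, g1, g2, g3, g4, g5, g6⟩ := key i hi hb
      rw [e1, e2, e3, e4]
      have a1 := hF.upper p q g1 g2 (by linarith)
      have a2 := hF.upper r s (by linarith) g4 g5
      have : θ * (s - p) = (q - p) + (s - r) := by linarith
      rw [this]
      linarith
    · simp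

theorem contract_exists {δ Δ : ℝ} (hδ : 0 < δ) (hΔ : δ ≤ Δ) {v vA : ℝ → ℝ}
    (hv : IsValueDensity δ Δ v) (hA : IsValueDensity δ Δ vA)
    {k : ℕ} (hk : 1 ≤ k) {c : Fin k → ℝ} (hc : ValidCuts k c) (b : Bool)
    {ρ : ℝ} (hρ : 0 ≤ ρ) :
    ∃ c', ValidCuts k c' ∧
      min 1 (pieceVal v (altPiece k c (!b)) + ρ) ≤ pieceVal v (altPiece k c' (!b)) ∧
      pieceVal vA (altPiece k c b) ≤ pieceVal vA (altPiece k c' b) + Δ / δ * ρ := by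
  have hl := altLen_nonneg hc b
  have hΔ0 : 0 < Δ := hδ.trans_le hΔ
  by_cases hs : altLen k c b ≤ ρ / δ
  · refine ⟨contract k c b 1, contract_valid hk hc b zero_le_one le_rfl, ?_, ?_⟩
    · refine (min_le_left _ _).trans ?_
      have hc' := contract_valid hk hc b zero_le_one (le_refl (1:ℝ))
      have := pieceVal_add hδ hv hc' b
      have hz : pieceVal v (altPiece k (contract k c b 1) b) = 0 := by
        rw [pieceVal_eq hδ hv hc', altSum]
        refine Finset.sum_eq_zero fun i hi => ?_
        split_ifs with hb
        · obtain ⟨h1, h2⟩ := contractX_props (extCuts_mono hc) (extCuts_zero k c)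
            (extCuts_last k c) hk b zero_le_one (le_refl (1:ℝ)) i
            (by simpa [Nat.lt_succ_iff] using hi)
          have h4 := (h2 hb).2.2
          rw [extCuts_contract, extCuts_contract]
          rw [show contractX (extCuts k c) k b 1 (i + 1) = contractX (extCuts k c) k b 1 i by
            linarith]
          simp
        · rfl
      linarith
    · have := (contract_value hδ hA hk hc b zero_le_one (le_refl (1:ℝ))).2
      have h3 : Δ * (1 * altLen k c b) ≤ Δ / δ * ρ := by
        calc Δ * (1 * altLen k c b) ≤ Δ * (ρ / δ) := by rw [one_mul]; gcongr
          _ = Δ / δ * ρ := by ring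
      linarith
  · push Not at hs
    have hl0 : 0 < altLen k c b := lt_of_le_of_lt (by positivity) hs
    have t0 : 0 ≤ ρ / δ / altLen k c b := by positivity
    have t1 : ρ / δ / altLen k c b ≤ 1 := by rw [div_le_one hl0]; exact hs.le
    have hc' := contract_valid hk hc b t0 t1
    have e : ρ / δ / altLen k c b * altLen k c b = ρ / δ := by field_simp
    refine ⟨_, hc', ?_, ?_⟩
    · refine (min_le_right _ _).trans ?_
      have g := (contract_value hδ hv hk hc b t0 t1).1
      rw [e, mul_div_cancel₀ _ hδ.ne'] at g
      have := pieceVal_add hδ hv hc' b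
      have := pieceVal_add hδ hv hc b
      linarith
    · have g := (contract_value hδ hA hk hc b t0 t1).2
      rw [e] at g
      have : Δ * (ρ / δ) = Δ / δ * ρ := by ring
      linarith

/-! ### Stackelberg value and exploitation -/

theorem stack_bdd {δ Δ : ℝ} (hδ : 0 < δ) {vA : ℝ → ℝ} (hA : IsValueDensity δ Δ vA) (k : ℕ)
    (vB : ℝ → ℝ) : BddAbove { u : ℝ | ∃ (c : Fin k → ℝ) (b : Bool), ValidCuts k c ∧
    1 / 2 ≤ pieceVal vB (altPiece k c (!b)) ∧ u = pieceVal vA (altPiece k c b) } := by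
  refine ⟨1, ?_⟩
  rintro u ⟨c, b, hc, _, rfl⟩
  exact pieceVal_le_one hδ hA hc b

theorem zeroCuts_valid (k : ℕ) : ValidCuts k (fun _ => 0) :=
  ⟨monotone_const, fun _ => by simp⟩

theorem stack_nonempty {δ Δ : ℝ} (hδ : 0 < δ) {vB : ℝ → ℝ} (hB : IsValueDensity δ Δ vB) (k : ℕ)
    (vA : ℝ → ℝ) : { u : ℝ | ∃ (c : Fin k → ℝ) (b : Bool), ValidCuts k c ∧
    1 / 2 ≤ pieceVal vB (altPiece k c (!b)) ∧ u = pieceVal vA (altPiece k c b) }.Nonempty := by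
  have h := pieceVal_add hδ hB (zeroCuts_valid k) true
  by_cases h1 : 1 / 2 ≤ pieceVal vB (altPiece k (fun _ => 0) true)
  · exact ⟨_, _, false, zeroCuts_valid k, by simpa using h1, rfl⟩
  · push Not at h1
    exact ⟨_, _, true, zeroCuts_valid k, by linarith, rfl⟩

theorem stack_le_one {δ Δ : ℝ} (hδ : 0 < δ) {vA vB : ℝ → ℝ} (hA : IsValueDensity δ Δ vA)
    (hB : IsValueDensity δ Δ vB) (k : ℕ) : stackelbergValue k vA vB ≤ 1 := by
  refine csSup_le (stack_nonempty hδ hB k vA) ?_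
  rintro u ⟨c, b, hc, _, rfl⟩
  exact pieceVal_le_one hδ hA hc b

theorem myopic_larger (k : ℕ) (vA vB : ℝ → ℝ) (T : ℕ) (h : Hist k) (c : Fin k → ℝ) :
    pieceVal vB (altPiece k c (!(myopicBob k vA vB T h c))) ≤
      pieceVal vB (altPiece k c (myopicBob k vA vB T h c)) := by
  unfold myopicBob
  split_ifs with h1 h2 h3
  · exact h1.le
  · exact h2.le
  · simpa using h2
  · simpa using h1

/-- Exploitation: a single cut vector that is good against all Bobs close to `w`. -/
theorem exploit {δ Δ : ℝ} (hδ : 0 < δ) (hΔ : δ ≤ Δ) {vA w : ℝ → ℝ} (hA : IsValueDensity δ Δ vA)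
    (hw : IsValueDensity δ Δ w) {k : ℕ} (hk : 1 ≤ k) {κ : ℝ} (hκ : 0 < κ) :
    ∃ c : {c // ValidCuts k c}, ∀ vB, IsValueDensity δ Δ vB →
      (∀ x ∈ Icc (0:ℝ) 1, |cumVal w x - cumVal vB x| ≤ κ) →
      stackelbergValue k vA vB -
        pieceVal vA (altPiece k c (!(myopicBob k vA vB 0 [] c))) ≤ 16 * (Δ / δ) * ((k + 1) * κ) := by
  have hD : 1 ≤ Δ / δ := by rwa [one_le_div hδ]
  set D := Δ / δ with hDdef
  set ρ : ℝ := (k + 1) * (2 * κ) with hρ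
  have hρ0 : 0 < ρ := by positivity
  have hkκ : 16 * D * ((k + 1) * κ) = 8 * D * ρ := by rw [hρ]; ring
  rw [hkκ]
  have hDρ : ρ ≤ D * ρ := le_mul_of_one_le_left hρ0.le hD
  have hκρ : κ ≤ ρ := by
    have : (0:ℝ) ≤ k := Nat.cast_nonneg k
    rw [hρ]; nlinarith
  by_cases hbig : 1 / 2 < 2 * ρ
  · refine ⟨⟨_, zeroCuts_valid k⟩, fun vB hB _ => ?_⟩
    have := stack_le_one hδ hA hB k
    have := pieceVal_nonneg hδ hA (zeroCuts_valid k) (!(myopicBob k vA vB 0 [] (fun _ => 0)))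
    dsimp only
    linarith
  push Not at hbig
  obtain ⟨u, ⟨c, b, hc, hf, rfl⟩, hu⟩ := exists_lt_of_lt_csSup (stack_nonempty hδ hw k vA)
    (show stackelbergValue k vA w - κ < stackelbergValue k vA w by linarith)
  obtain ⟨c', hc', h1, h2⟩ := contract_exists hδ hΔ hw hA hk hc b
    (show 0 ≤ 2 * ρ by linarith)
  refine ⟨⟨c', hc'⟩, fun vB hB hclose => ?_⟩
  have h3 : 1 / 2 + 2 * ρ ≤ pieceVal w (altPiece k c' (!b)) :=
    (le_min (by linarith) (by linarith)).trans h1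
  have h4 := pieceVal_close hδ hw hB hc' (!b) hclose
  rw [← hρ] at h4
  have h5 := pieceVal_add hδ hB hc' b
  have hbob : myopicBob k vA vB 0 [] c' = !b := by
    have h6 := myopic_larger k vA vB 0 [] c'
    by_contra hne
    have : myopicBob k vA vB 0 [] c' = b := by
      revert hne; cases b <;> cases myopicBob k vA vB 0 [] c' <;> simp
    rw [this] at h6
    linarith
  have hS : stackelbergValue k vA vB ≤ stackelbergValue k vA w + D * ρ := by
    refine csSup_le (stack_nonempty hδ hB k vA) ?_
    rintro u ⟨e, d, he, hd, rfl⟩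
    obtain ⟨e', he', g1, g2⟩ := contract_exists hδ hΔ hw hA hk he d hρ0.le
    have g3 := pieceVal_close hδ hB hw he (!d)
      (fun x hx => by rw [abs_sub_comm]; exact hclose x hx)
    rw [← hρ] at g3
    have g4 : 1 / 2 ≤ pieceVal w (altPiece k e' (!d)) :=
      (le_min (by norm_num) (by linarith)).trans g1
    have : pieceVal vA (altPiece k e' d) ≤ stackelbergValue k vA w :=
      le_csSup (stack_bdd hδ hA k w) ⟨e', d, he', g4, rfl⟩
    linarith
  dsimp only
  rw [hbob, Bool.not_not]
  nlinarith

/-! ### Query trees -/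

/-- Decision trees whose inner nodes are valid cut vectors. -/
inductive QTree (k : ℕ) (α : Type) : Type
  | ret : α → QTree k α
  | ask : {c : Fin k → ℝ // ValidCuts k c} → (Bool → QTree k α) → QTree k α

namespace QTree

variable {k : ℕ} {α β : Type}

/-- Number of queries along the run with oracle `o`. -/
def steps (o : (Fin k → ℝ) → Bool) : QTree k α → ℕ
  | ret _ => 0
  | ask c f => steps o (f (o c)) + 1

/-- Result of the run with oracle `o`. -/
def result (o : (Fin k → ℝ) → Bool) : QTree k α → α
  | ret a => a
  | ask c f => result o (f (o c))

/-- Sequential composition. -/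
def bind : QTree k α → (α → QTree k β) → QTree k β
  | ret a, g => g a
  | ask c f, g => ask c (fun b => bind (f b) g)

theorem result_bind (o : (Fin k → ℝ) → Bool) (t : QTree k α) (g : α → QTree k β) :
    result o (bind t g) = result o (g (result o t)) := by
  induction t with
  | ret a => rfl
  | ask c f ih => exact ih (o c)

theorem steps_bind (o : (Fin k → ℝ) → Bool) (t : QTree k α) (g : α → QTree k β) :
    steps o (bind t g) = steps o t + steps o (g (result o t)) := by
  induction t with
  | ret a => simp [bind, steps, result]
  | ask c f ih =>
    simp only [bind, steps, result, ih (o c)]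
    omega

/-- Advance by one answer. -/
def advance : QTree k α → Bool → QTree k α
  | ret a, _ => ret a
  | ask _ f, b => f b

/-- The cut vector to be played. -/
def cut : QTree k {c : Fin k → ℝ // ValidCuts k c} → {c : Fin k → ℝ // ValidCuts k c}
  | ret a => a
  | ask c _ => c

theorem steps_advance (o : (Fin k → ℝ) → Bool)
    (t : QTree k {c : Fin k → ℝ // ValidCuts k c}) :
    steps o (advance t (o (cut t))) = steps o t - 1 := by
  cases t <;> simp [advance, cut, steps]

theorem result_advance (o : (Fin k → ℝ) → Bool)
    (t : QTree k {c : Fin k → ℝ // ValidCuts k c}) :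
    result o (advance t (o (cut t))) = result o t := by
  cases t <;> simp [advance, cut, result]

theorem cut_of_steps (o : (Fin k → ℝ) → Bool)
    (t : QTree k {c : Fin k → ℝ // ValidCuts k c}) (h : steps o t = 0) :
    cut t = result o t := by
  cases t with
  | ret a => rfl
  | ask c f => simp [steps] at h

end QTree

/-- The strategy that follows a query tree and then repeats its result. -/
def treeStrategy (k : ℕ) (t : ℕ → QTree k {c : Fin k → ℝ // ValidCuts k c}) : AliceStrategy k :=
  fun T h => (QTree.cut (h.foldl (fun r p => QTree.advance r p.2) (t T))).1

theorem treeStrategy_state (k : ℕ) (tr : ℕ → QTree k {c : Fin k → ℝ // ValidCuts k c})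
    (SB : BobStrategy k) (o : (Fin k → ℝ) → Bool) (hSB : ∀ T h c, SB T h c = o c) (T t : ℕ) :
    let r := (playHist k (treeStrategy k tr) SB T t).foldl
      (fun r p => QTree.advance r p.2) (tr T)
    QTree.steps o r = QTree.steps o (tr T) - t ∧ QTree.result o r = QTree.result o (tr T) := by
  induction t with
  | zero => simp [playHist]
  | succ t ih =>
    obtain ⟨h1, h2⟩ := ih
    simp only [playHist, List.foldl_append, List.foldl_cons, List.foldl_nil]
    rw [hSB]
    simp only [treeStrategy]
    rw [QTree.steps_advance, QTree.result_advance, h1, h2]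
    exact ⟨by omega, rfl⟩

theorem treeStrategy_regret {δ Δ : ℝ} (hδ : 0 < δ) {vA vB : ℝ → ℝ} (hA : IsValueDensity δ Δ vA)
    (hB : IsValueDensity δ Δ vB) (k : ℕ) (tr : ℕ → QTree k {c : Fin k → ℝ // ValidCuts k c})
    (T : ℕ) {M : ℕ} {ε : ℝ} (hε : 0 ≤ ε)
    (hM : QTree.steps (myopicBob k vA vB 0 []) (tr T) ≤ M)
    (hr : ∀ c, QTree.result (myopicBob k vA vB 0 []) (tr T) = c → stackelbergValue k vA vB -
        pieceVal vA (altPiece k c (!(myopicBob k vA vB 0 [] c))) ≤ ε) :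
    aliceRegret k vA vB (treeStrategy k tr) (myopicBob k vA vB) T ≤ M + T * ε := by
  unfold aliceRegret
  have hround : ∀ t ∈ Finset.range T, (stackelbergValue k vA vB -
      pieceVal vA (altPiece k (roundCuts k (treeStrategy k tr) (myopicBob k vA vB) T t)
        (!(roundChoice k (treeStrategy k tr) (myopicBob k vA vB) T t)))) ≤
      (if t < M then 1 else 0) + ε := by
    intro t _
    have hvalid : ValidCuts k (roundCuts k (treeStrategy k tr) (myopicBob k vA vB) T t) :=
      Subtype.property _
    split_ifs with ht
    · have h1 := stack_le_one hδ hA hB k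
      have h2 := pieceVal_nonneg hδ hA hvalid
        (!(roundChoice k (treeStrategy k tr) (myopicBob k vA vB) T t))
      linarith
    · obtain ⟨h1, h2⟩ := treeStrategy_state k tr (myopicBob k vA vB) (myopicBob k vA vB 0 [])
        (fun _ _ _ => rfl) T t
      have h3 := QTree.cut_of_steps _ _ (h1.trans (by omega))
      rw [h2] at h3
      have h4 := hr _ h3.symm
      rw [zero_add]
      exact h4
  refine (Finset.sum_le_sum hround).trans ?_
  rw [Finset.sum_add_distrib, Finset.sum_const, Finset.card_range, nsmul_eq_mul]
  gcongr
  rw [Finset.sum_ite, Finset.sum_const, Finset.sum_const_zero, add_zero, nsmul_eq_mul, mul_one]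
  norm_cast
  calc _ ≤ (Finset.range M).card := Finset.card_le_card fun x hx => by
        simp at hx ⊢; exact hx.2
    _ = M := Finset.card_range M

/-! ### Identification of Bob's cumulative value from consistent data -/

/-- The information gathered by exploration. -/
structure Consistent (F : ℝ → ℝ) (η ε : ℝ) (n M : ℕ) (m : ℝ) (y w : ℕ → ℝ) : Prop where
  m_ge : η ≤ m
  m_le : m ≤ 1
  m_half : |F m - 1 / 2| ≤ ε
  y_zero : y 0 = m
  y_mem : ∀ i ≤ M, y i ∈ Icc m 1
  y_step : ∀ i < M, |F (y (i + 1)) - min (F (y i) + 1 / 2 - F (m - η)) 1| ≤ ε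
  w_mem : ∀ j ≤ n, w j ∈ Icc ((j:ℝ) / n) 1
  w_step : ∀ j ≤ n, |F (w j) - min (F ((j:ℝ) / n) + 1 / 2) 1| ≤ ε

theorem min_step {p u A B ε e : ℝ} (hu : 0 ≤ u) (h1 : |A - min p 1| ≤ e)
    (h2 : |B - min (A + u) 1| ≤ ε) : |B - min (p + u) 1| ≤ e + ε := by
  rw [abs_le] at *
  obtain ⟨h1, h1'⟩ := h1
  obtain ⟨h2, h2'⟩ := h2
  rcases le_total p 1 with h | h <;> rcases le_total (A + u) 1 with h' | h' <;>
    rcases le_total (p + u) 1 with h'' | h'' <;>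
    simp only [h, h', h'', min_eq_left, min_eq_right] at h1 h1' h2 h2' ⊢ <;> constructor <;> linarith

/-- Facts about one consistent cumulative function. -/
theorem Consistent.facts {δ Δ η ε : ℝ} {n M : ℕ} {m : ℝ} {y w : ℕ → ℝ} {F : ℝ → ℝ}
    (hδ : 0 < δ) (hη : 0 < η) (hε : ε ≤ δ * η / 2)
    (hMε : (M + 1) * ε ≤ η)
    (hF : IsCum δ Δ F) (h : Consistent F η ε n M m y w) :
    δ * η / 2 ≤ 1 / 2 - F (m - η) ∧ 1 / 2 - F (m - η) ≤ Δ * η + ε ∧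
    ∀ i ≤ M, |F (y i) - min (1 / 2 + i * (1 / 2 - F (m - η))) 1| ≤ η := by
  have hε0 : 0 ≤ ε := (abs_nonneg _).trans h.m_half
  have l1 := hF.lower (m - η) m (by linarith [h.m_ge]) (by linarith) h.m_le
  have l2 := hF.upper (m - η) m (by linarith [h.m_ge]) (by linarith) h.m_le
  rw [sub_sub_cancel] at l1 l2
  have hm := abs_le.1 h.m_half
  have hu : δ * η / 2 ≤ 1 / 2 - F (m - η) := by linarith [hm.1]
  have hu0 : 0 ≤ 1 / 2 - F (m - η) := le_trans (by positivity) hu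
  refine ⟨hu, by linarith [hm.2], ?_⟩
  have key : ∀ i ≤ M, |F (y i) - min (1 / 2 + i * (1 / 2 - F (m - η))) 1| ≤ (i + 1) * ε := by
    intro i
    induction i with
    | zero =>
      intro _
      rw [h.y_zero]
      norm_num
      convert h.m_half using 2
    | succ i ih =>
      intro hi
      have a1 := ih (by omega)
      have a2 := h.y_step i (by omega)
      rw [add_sub_assoc] at a2
      have a3 := min_step hu0 a1 a2
      push_cast
      convert a3 using 1
      · congr 3; ring
      · ring
  intro i hi
  refine (key i hi).trans (le_trans ?_ hMε)
  have : (i:ℝ) ≤ M := by exact_mod_cast hi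
  gcongr

theorem unit_compare {δ Δ η ε : ℝ} {n M : ℕ} {m : ℝ} {y w : ℕ → ℝ} {F G : ℝ → ℝ}
    (hδ : 0 < δ) (hΔ : δ ≤ Δ) (hη : 0 < η) (hε : ε ≤ δ * η / 2)
    (hMε : (M + 1) * ε ≤ η) (hM : 1 ≤ M * (δ * η))
    (hF : IsCum δ Δ F) (hG : IsCum δ Δ G)
    (h : Consistent F η ε n M m y w) (h' : Consistent G η ε n M m y w) :
    ∀ i ≤ M, F (y i) - G (y i) ≤ (2 * Δ + Δ / δ + 3) * η := by
  obtain ⟨u1, u2, u3⟩ := h.facts hδ hη hε hMε hF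
  obtain ⟨v1, v2, v3⟩ := h'.facts hδ hη hε hMε hG
  set u := 1 / 2 - F (m - η)
  set v := 1 / 2 - G (m - η)
  have hδη : 0 < δ * η := by positivity
  have hΔη : δ * η ≤ Δ * η := by gcongr
  have hDη : 0 ≤ Δ / δ * η := by have := hδ.trans_le hΔ; positivity
  have hu0 : 0 < u := by linarith
  have hv0 : 0 < v := by linarith
  suffices H : ∀ i ≤ M, min (1 / 2 + i * u) 1 - min (1 / 2 + i * v) 1 ≤
      (2 * Δ + Δ / δ + 1) * η by
    intro i hi
    have a := abs_le.1 (u3 i hi)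
    have b := abs_le.1 (v3 i hi)
    have c := H i hi
    linarith [a.2, b.1]
  have hex : ∃ N : ℕ, 1 / 2 ≤ N * u := ⟨M, by nlinarith⟩
  classical
  have hNspec := Nat.find_spec hex
  have hNmin := fun j (hj : j < Nat.find hex) => Nat.find_min hex hj
  have hNM : Nat.find hex ≤ M := Nat.find_le (by nlinarith)
  set N := Nat.find hex
  have hN1 : N * u ≤ 1 / 2 + u := by
    rcases Nat.eq_zero_or_pos N with h0 | h0
    · rw [h0]; norm_num; linarith
    · have := hNmin (N - 1) (by omega)
      rw [Nat.cast_sub h0] at this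
      push Not at this
      push_cast at this
      linarith
  -- Bob `G` also nearly exhausts the cake after `N` steps
  have b1 := (abs_le.1 (u3 N hNM)).1
  rw [min_eq_right (by linarith)] at b1
  have hy := h.y_mem N hNM
  have hy0 : 0 ≤ y N := by linarith [hy.1, h.m_ge]
  have b2 := hF.lower (y N) 1 hy0 hy.2 le_rfl
  have b3 := hG.upper (y N) 1 hy0 hy.2 le_rfl
  rw [hF.one] at b2
  rw [hG.one] at b3
  have b4 : Δ * (1 - y N) ≤ Δ / δ * η := by
    have e : Δ * (1 - y N) = Δ / δ * (δ * (1 - y N)) := by field_simp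
    rw [e]
    have := hδ.trans_le hΔ
    gcongr
    linarith
  have b5 := (abs_le.1 (v3 N hNM)).2
  have b6 : 1 - (Δ / δ + 1) * η ≤ min (1 / 2 + N * v) 1 := by linarith
  have b7 := b6.trans (min_le_left _ _)
  intro i hi
  rcases le_total u v with huv | huv
  · have : min (1 / 2 + i * u) 1 ≤ min (1 / 2 + i * v) 1 := by gcongr
    have : 0 ≤ (2 * Δ + Δ / δ + 1) * η := by linarith
    linarith
  rcases le_total i N with hiN | hiN
  · have hiN' : (i:ℝ) ≤ N := by exact_mod_cast hiN
    have c1 : (i:ℝ) * (u - v) ≤ N * (u - v) := by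
      apply mul_le_mul_of_nonneg_right hiN'; linarith
    rcases le_total (1 / 2 + i * v) 1 with g | g
    · rw [min_eq_left g]
      have := min_le_left (1 / 2 + i * u) 1
      nlinarith
    · rw [min_eq_right g]
      have := min_le_right (1 / 2 + i * u) 1
      linarith
  · have hiN' : (N:ℝ) ≤ i := by exact_mod_cast hiN
    have c2 : min (1 / 2 + N * v) 1 ≤ min (1 / 2 + i * v) 1 := by gcongr
    have := min_le_right (1 / 2 + i * u) 1
    linarith

theorem right_compare {δ Δ η ε : ℝ} {n M : ℕ} {m : ℝ} {y w : ℕ → ℝ} {F G : ℝ → ℝ}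
    (hδ : 0 < δ) (hΔ : δ ≤ Δ) (hΔ1 : 1 ≤ Δ) (hη : 0 < η) (hε : ε ≤ δ * η / 2)
    (hMε : (M + 1) * ε ≤ η) (hM : 1 ≤ M * (δ * η))
    (hF : IsCum δ Δ F) (hG : IsCum δ Δ G)
    (h : Consistent F η ε n M m y w) (h' : Consistent G η ε n M m y w)
    {x : ℝ} (hx : m ≤ x) (hx1 : x ≤ 1) : F x - G x ≤ (5 * Δ + Δ / δ + 3) * η := by
  obtain ⟨u1, u2, u3⟩ := h.facts hδ hη hε hMε hF
  have hcmp := unit_compare hδ hΔ hη hε hMε hM hF hG h h'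
  have hδη : 0 < δ * η := by positivity
  have hΔη : δ * η ≤ Δ * η := by gcongr
  have hΔη' : η ≤ Δ * η := le_mul_of_one_le_left hη.le hΔ1
  have hgap : ∃ i ≤ M, y i ≤ x ∧ F x - F (y i) ≤ 3 * (Δ * η) := by
    classical
    by_cases hlast : y M ≤ x
    · refine ⟨M, le_rfl, hlast, ?_⟩
      have a := (abs_le.1 (u3 M le_rfl)).1
      rw [min_eq_right (by nlinarith)] at a
      have hm0 : 0 ≤ x := by linarith [h.m_ge]
      have := hF.mono hδ hm0 hx1 le_rfl
      rw [hF.one] at this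
      linarith
    · have hex : ∃ i, i ≤ M ∧ x < y i := ⟨M, le_rfl, not_le.1 hlast⟩
      have hs := Nat.find_spec hex
      have hmin := fun j (hj : j < Nat.find hex) => Nat.find_min hex hj
      set N := Nat.find hex
      have hN0 : N ≠ 0 := by
        intro h0
        rw [h0, h.y_zero] at hs
        linarith [hs.2]
      obtain ⟨j, hj⟩ := Nat.exists_eq_succ_of_ne_zero hN0
      rw [Nat.succ_eq_add_one] at hj
      have h1 := hmin j (by omega)
      have hjx : y j ≤ x := by
        by_contra hc
        exact h1 ⟨by omega, not_le.1 hc⟩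
      refine ⟨j, by omega, hjx, ?_⟩
      rw [hj] at hs
      have a := (abs_le.1 (h.y_step j (by omega))).2
      have b := min_le_left (F (y j) + 1 / 2 - F (m - η)) 1
      have hm0 : 0 ≤ x := by linarith [h.m_ge]
      have := hF.mono hδ hm0 hs.2.le (h.y_mem (j + 1) hs.1).2
      linarith
  obtain ⟨i, hi, hix, hg⟩ := hgap
  have hyi := h.y_mem i hi
  have := hG.mono hδ (by linarith [h.m_ge, hyi.1]) hix hx1
  have := hcmp i hi
  linarith

theorem compare {δ Δ η ε : ℝ} {n M : ℕ} {m : ℝ} {y w : ℕ → ℝ} {F G : ℝ → ℝ}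
    (hδ : 0 < δ) (hΔ : δ ≤ Δ) (hΔ1 : 1 ≤ Δ) (hη : 0 < η) (hε : ε ≤ δ * η / 2)
    (hMε : (M + 1) * ε ≤ η) (hM : 1 ≤ M * (δ * η)) (hn : 1 ≤ n) (hnη : 1 ≤ 4 * Δ * η * n)
    (hF : IsCum δ Δ F) (hG : IsCum δ Δ G)
    (h : Consistent F η ε n M m y w) (h' : Consistent G η ε n M m y w)
    {x : ℝ} (hx0 : 0 ≤ x) (hx1 : x ≤ 1) :
    F x - G x ≤ (7 * Δ + Δ / δ + 3 + 4 * Δ ^ 2) * η := by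
  have hΔ0 : 0 < Δ := by linarith
  have hδη : 0 < δ * η := by positivity
  have hΔη : δ * η ≤ Δ * η := by gcongr
  have hDη : 0 ≤ Δ / δ * η := by positivity
  have hΔη2 : 0 ≤ Δ ^ 2 * η := by positivity
  rcases le_total m x with hmx | hmx
  · have := right_compare hδ hΔ hΔ1 hη hε hMε hM hF hG h h' hmx hx1
    linarith
  have hn0 : (0:ℝ) < n := by exact_mod_cast hn
  set j := ⌊x * n⌋₊ with hj
  have j1 : (j:ℝ) ≤ x * n := Nat.floor_le (by positivity)
  have j2 : x * n < j + 1 := Nat.lt_floor_add_one _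
  have jn : j ≤ n := by
    have : (j:ℝ) ≤ n := j1.trans (by nlinarith)
    exact_mod_cast this
  have z0 : (0:ℝ) ≤ (j:ℝ) / n := by positivity
  have zx : (j:ℝ) / n ≤ x := by rwa [div_le_iff₀ hn0]
  have zx' : x - (j:ℝ) / n ≤ 4 * Δ * η := by
    have : x ≤ (j + 1) / n := by rw [le_div_iff₀ hn0]; exact j2.le
    have h2 : (1:ℝ) / n ≤ 4 * Δ * η := by rwa [div_le_iff₀ hn0]
    rw [add_div] at this
    linarith
  have w1 := h.w_step j jn
  have w1' := h'.w_step j jn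
  have wm := h.w_mem j jn
  set z := (j:ℝ) / n
  have zm : z ≤ m := zx.trans hmx
  have f1 := hF.mono hδ z0 zm h.m_le
  have g1 := hG.mono hδ z0 zm h.m_le
  have f0 := hF.mono hδ le_rfl z0 (zm.trans h.m_le)
  have g0 := hG.mono hδ le_rfl z0 (zm.trans h.m_le)
  rw [hF.zero] at f0
  rw [hG.zero] at g0
  have fm := abs_le.1 h.m_half
  have gm := abs_le.1 h'.m_half
  have hε0 : 0 ≤ ε := (abs_nonneg _).trans h.m_half
  have f2 : F z + 1 / 2 - ε ≤ min (F z + 1 / 2) 1 := le_min (by linarith) (by linarith [fm.2])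
  have g2 := min_le_left (G z + 1 / 2) 1
  have g3 : G z + 1 / 2 - ε ≤ min (G z + 1 / 2) 1 := le_min (by linarith) (by linarith [gm.2])
  have w2 := abs_le.1 w1
  have w2' := abs_le.1 w1'
  have w0 : 0 ≤ w j := z0.trans wm.1
  have hw : F (w j) - G (w j) ≤ (5 * Δ + Δ / δ + 3) * η := by
    rcases le_total m (w j) with hc | hc
    · exact right_compare hδ hΔ hΔ1 hη hε hMε hM hF hG h h' hc wm.2
    · have := hF.mono hδ w0 hc h.m_le
      linarith [fm.2, w2'.1]
  have fx := hF.upper z x z0 zx hx1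
  have gx := hG.mono hδ z0 zx hx1
  have : Δ * (x - z) ≤ Δ * (4 * Δ * η) := by gcongr
  nlinarith [w2.1, w2'.2]

/-! ### Learning with queries -/

/-- `Learn δ Δ k vA pre n post`: some query tree, run against any myopic Bob whose density satisfies
`pre`, makes at most `n` queries and returns a value satisfying `post`. -/
def Learn (δ Δ : ℝ) (k : ℕ) (vA : ℝ → ℝ) {α : Type} (pre : (ℝ → ℝ) → Prop) (n : ℕ)
    (post : (ℝ → ℝ) → α → Prop) : Prop :=
  ∃ t : QTree k α, ∀ v, IsValueDensity δ Δ v → pre v →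
    QTree.steps (myopicBob k vA v 0 []) t ≤ n ∧ post v (QTree.result (myopicBob k vA v 0 []) t)

section LearnLemmas

variable {δ Δ : ℝ} {k : ℕ} {vA : ℝ → ℝ} {α β : Type}

theorem Learn.pure {pre : (ℝ → ℝ) → Prop} {n : ℕ} {post : (ℝ → ℝ) → α → Prop} (a : α)
    (h : ∀ v, IsValueDensity δ Δ v → pre v → post v a) : Learn δ Δ k vA pre n post :=
  ⟨.ret a, fun v hv hp => ⟨Nat.zero_le _, h v hv hp⟩⟩

theorem Learn.bind {pre : (ℝ → ℝ) → Prop} {n m : ℕ} {P : (ℝ → ℝ) → α → Prop}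
    {Q : (ℝ → ℝ) → β → Prop} (h1 : Learn δ Δ k vA pre n P)
    (h2 : ∀ a, Learn δ Δ k vA (fun v => pre v ∧ P v a) m Q) :
    Learn δ Δ k vA pre (n + m) Q := by
  obtain ⟨t, ht⟩ := h1
  choose g hg using h2
  refine ⟨t.bind g, fun v hv hp => ?_⟩
  obtain ⟨a1, a2⟩ := ht v hv hp
  obtain ⟨b1, b2⟩ := hg _ v hv ⟨hp, a2⟩
  rw [QTree.steps_bind, QTree.result_bind]
  exact ⟨by omega, b2⟩

theorem Learn.map {pre pre' : (ℝ → ℝ) → Prop} {n : ℕ} {P : (ℝ → ℝ) → α → Prop}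
    {Q : (ℝ → ℝ) → β → Prop} (h : Learn δ Δ k vA pre' n P) (f : α → β)
    (hpre : ∀ v, IsValueDensity δ Δ v → pre v → pre' v)
    (hf : ∀ v a, IsValueDensity δ Δ v → pre v → P v a → Q v (f a)) :
    Learn δ Δ k vA pre n Q := by
  obtain ⟨t, ht⟩ := h
  refine ⟨t.bind fun a => .ret (f a), fun v hv hp => ?_⟩
  obtain ⟨a1, a2⟩ := ht v hv (hpre v hv hp)
  rw [QTree.steps_bind, QTree.result_bind]
  exact ⟨by simpa [QTree.steps] using a1, hf v _ hv hp a2⟩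

theorem Learn.mono_pre {pre pre' : (ℝ → ℝ) → Prop} {n : ℕ} {P : (ℝ → ℝ) → α → Prop}
    (h : Learn δ Δ k vA pre' n P) (hpre : ∀ v, IsValueDensity δ Δ v → pre v → pre' v) :
    Learn δ Δ k vA pre n P :=
  h.map id hpre fun _ _ _ _ h => h

theorem Learn.of_exists [Inhabited α] {pre : (ℝ → ℝ) → Prop} {n : ℕ} {P : (ℝ → ℝ) → α → Prop}
    (h : ∀ v, IsValueDensity δ Δ v → pre v → Learn δ Δ k vA pre n P) :
    Learn δ Δ k vA pre n P := by
  by_cases hex : ∃ v, IsValueDensity δ Δ v ∧ pre v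
  · obtain ⟨v, hv, hp⟩ := hex
    exact h v hv hp
  · exact Learn.pure default fun v hv hp => absurd ⟨v, hv, hp⟩ hex

/-- The cut vector `a, y, s, 1, …, 1`. -/
def cuts3 (k : ℕ) (a y s : ℝ) : Fin k → ℝ := fun i =>
  if i.val = 0 then a else if i.val = 1 then y else if i.val = 2 then s else 1

theorem cuts3_valid (k : ℕ) {a y s : ℝ} (h0 : 0 ≤ a) (h1 : a ≤ y) (h2 : y ≤ s) (h3 : s ≤ 1) :
    ValidCuts k (cuts3 k a y s) := by
  constructor
  · intro i j hij
    rw [Fin.le_def] at hij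
    unfold cuts3
    split_ifs <;> first | linarith | omega
  · intro i
    unfold cuts3
    split_ifs <;> constructor <;> linarith

theorem cuts3_value (hδ : 0 < δ) {v : ℝ → ℝ} (hv : IsValueDensity δ Δ v) (hk : 3 ≤ k)
    {a y s : ℝ} (h0 : 0 ≤ a) (h1 : a ≤ y) (h2 : y ≤ s) (h3 : s ≤ 1) :
    pieceVal v (altPiece k (cuts3 k a y s) true) = cumVal v a + (cumVal v s - cumVal v y) := by
  rw [pieceVal_eq hδ hv (cuts3_valid k h0 h1 h2 h3), altSum]
  obtain ⟨r, rfl⟩ := Nat.exists_eq_add_of_le hk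
  rw [show 3 + r + 1 = 4 + r by ring, Finset.sum_range_add]
  have hz : ∀ i ∈ Finset.range r, (if decide ((4 + i) % 2 = 0) = true then
      cumVal v (extCuts (3 + r) (cuts3 (3 + r) a y s) (4 + i + 1)) -
        cumVal v (extCuts (3 + r) (cuts3 (3 + r) a y s) (4 + i)) else 0) = 0 := by
    intro i _
    have e : ∀ j, extCuts (3 + r) (cuts3 (3 + r) a y s) (4 + j) = 1 := by
      intro j
      unfold extCuts cuts3
      dsimp only
      split_ifs <;> first | rfl | omega
    rw [add_assoc, e, e, sub_self, ite_self]
  rw [Finset.sum_eq_zero hz]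
  simp [Finset.sum_range_succ, extCuts, cuts3, (cumVal_isCum hδ hv).zero,
    show 1 < 3 + r by omega, show 2 < 3 + r by omega]

theorem answer_true (hδ : 0 < δ) {v : ℝ → ℝ} (hv : IsValueDensity δ Δ v)
    {c : Fin k → ℝ} (hc : ValidCuts k c) (h : myopicBob k vA v 0 [] c = true) :
    1 / 2 ≤ pieceVal v (altPiece k c true) := by
  have h1 := myopic_larger k vA v 0 [] c
  have h2 := pieceVal_add hδ hv hc true
  rw [h] at h1
  linarith

theorem answer_false (hδ : 0 < δ) {v : ℝ → ℝ} (hv : IsValueDensity δ Δ v)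
    {c : Fin k → ℝ} (hc : ValidCuts k c) (h : myopicBob k vA v 0 [] c = false) :
    pieceVal v (altPiece k c true) ≤ 1 / 2 := by
  have h1 := myopic_larger k vA v 0 [] c
  have h2 := pieceVal_add hδ hv hc true
  rw [h] at h1
  simp only [Bool.not_false, Bool.not_true] at h1 h2
  linarith

theorem search_aux (hδ : 0 < δ) (hk : 3 ≤ k) {a y : ℝ}
    (h0 : 0 ≤ a) (h1 : a ≤ y) (L : ℕ) : ∀ lo hi : ℝ, y ≤ lo → lo ≤ hi → hi ≤ 1 →
    Learn δ Δ k vA (fun v => cumVal v lo ≤ min (cumVal v y + 1 / 2 - cumVal v a) 1 ∧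
        min (cumVal v y + 1 / 2 - cumVal v a) 1 ≤ cumVal v hi) L
      (fun v s => s ∈ Icc lo hi ∧
        |cumVal v s - min (cumVal v y + 1 / 2 - cumVal v a) 1| ≤ Δ * (hi - lo) / 2 ^ L) := by
  induction L with
  | zero =>
    intro lo hi hl hlh hh
    refine Learn.pure lo fun v hv hp => ⟨⟨le_rfl, hlh⟩, ?_⟩
    have := (cumVal_isCum hδ hv).upper lo hi (by linarith) hlh hh
    rw [pow_zero, div_one, abs_le]
    constructor <;> linarith [hp.1, hp.2]
  | succ L ih =>
    intro lo hi hl hlh hh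
    obtain ⟨t1, ht1⟩ := ih lo ((lo + hi) / 2) hl (by linarith) (by linarith)
    obtain ⟨t2, ht2⟩ := ih ((lo + hi) / 2) hi (by linarith) (by linarith) (by linarith)
    have hval := cuts3_valid k h0 h1 (show y ≤ (lo + hi) / 2 by linarith)
      (show (lo + hi) / 2 ≤ 1 by linarith)
    refine ⟨.ask ⟨cuts3 k a y ((lo + hi) / 2), hval⟩ (fun b => if b then t1 else t2),
      fun v hv hp => ?_⟩
    have hcv := cuts3_value hδ hv hk h0 h1 (show y ≤ (lo + hi) / 2 by linarith)
      (show (lo + hi) / 2 ≤ 1 by linarith)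
    simp only [QTree.steps, QTree.result]
    have e1 : Δ * ((lo + hi) / 2 - lo) / 2 ^ L = Δ * (hi - lo) / 2 ^ (L + 1) := by
      rw [pow_succ]; field_simp; ring
    have e2 : Δ * (hi - (lo + hi) / 2) / 2 ^ L = Δ * (hi - lo) / 2 ^ (L + 1) := by
      rw [pow_succ]; field_simp; ring
    cases hans : myopicBob k vA v 0 [] (cuts3 k a y ((lo + hi) / 2)) with
    | true =>
      have ha := answer_true hδ hv hval hans
      rw [hcv] at ha
      obtain ⟨g1, g2, g3⟩ := ht1 v hv ⟨hp.1, (min_le_left _ _).trans (by linarith)⟩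
      rw [e1] at g3
      simp only [if_true]
      exact ⟨by omega, ⟨g2.1, by linarith [g2.2]⟩, g3⟩
    | false =>
      have ha := answer_false hδ hv hval hans
      rw [hcv] at ha
      have hle := (cumVal_isCum hδ hv).mono hδ (show 0 ≤ (lo + hi) / 2 by linarith)
        (show (lo + hi) / 2 ≤ 1 by linarith) le_rfl
      rw [(cumVal_isCum hδ hv).one] at hle
      obtain ⟨g1, g2, g3⟩ := ht2 v hv ⟨le_min (by linarith) hle, hp.2⟩
      rw [e2] at g3
      simp only [Bool.false_eq_true, if_false]
      exact ⟨by omega, ⟨by linarith [g2.1], g2.2⟩, g3⟩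

theorem search (hδ : 0 < δ) (hΔ : δ ≤ Δ) (hk : 3 ≤ k) {a y : ℝ}
    (h0 : 0 ≤ a) (h1 : a ≤ y) (h2 : y ≤ 1) (L : ℕ) :
    Learn δ Δ k vA (fun v => cumVal v a ≤ 1 / 2) L
      (fun v s => s ∈ Icc y 1 ∧
        |cumVal v s - min (cumVal v y + 1 / 2 - cumVal v a) 1| ≤ Δ / 2 ^ L) := by
  refine (search_aux hδ hk h0 h1 L y 1 le_rfl h2 le_rfl).map id ?_ ?_
  · intro v hv hp
    have hF := cumVal_isCum hδ hv
    have h4 := hF.mono hδ (h0.trans h1) h2 le_rfl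
    rw [hF.one] at h4 ⊢
    exact ⟨le_min (by linarith) h4, min_le_right _ _⟩
  · rintro v s hv hp ⟨hs, hs'⟩
    refine ⟨hs, hs'.trans ?_⟩
    have : 0 < Δ := hδ.trans_le hΔ
    gcongr
    nlinarith

theorem march (hδ : 0 < δ) (hΔ : δ ≤ Δ) (hk : 3 ≤ k) {a m : ℝ}
    (h0 : 0 ≤ a) (h1 : a ≤ m) (h2 : m ≤ 1) (L : ℕ) (M : ℕ) :
    Learn δ Δ k vA (fun v => cumVal v a ≤ 1 / 2) (M * L)
      (fun v (y : ℕ → ℝ) => y 0 = m ∧ (∀ i ≤ M, y i ∈ Icc m 1) ∧ ∀ i < M,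
        |cumVal v (y (i + 1)) - min (cumVal v (y i) + 1 / 2 - cumVal v a) 1| ≤ Δ / 2 ^ L) := by
  induction M with
  | zero =>
    refine Learn.pure (fun _ => m) fun v hv hp => ⟨rfl, fun i _ => ⟨le_rfl, h2⟩, fun i hi => ?_⟩
    omega
  | succ M ih =>
    rw [Nat.succ_mul]
    refine ih.bind fun y => Learn.of_exists ?_
    rintro _ _ ⟨_, _, hy, _⟩
    have hyM := hy M le_rfl
    refine (search hδ hΔ hk h0 (h1.trans hyM.1) hyM.2 L).map
      (fun s => Function.update y (M + 1) s) (fun v _ hp => hp.1) ?_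
    rintro v s hv ⟨hp, g0, g1, g2⟩ ⟨hs, hs'⟩
    have hu : ∀ i ≤ M, Function.update y (M + 1) s i = y i := fun i hi =>
      Function.update_of_ne (by omega) _ _
    refine ⟨by rw [hu 0 (by omega)]; exact g0, fun i hi => ?_, fun i hi => ?_⟩
    · rcases Nat.lt_or_ge M i with h | h
      · rw [show i = M + 1 by omega, Function.update_self]
        exact ⟨hyM.1.trans hs.1, hs.2⟩
      · rw [hu i h]; exact g1 i h
    · rw [hu i (by omega)]
      rcases Nat.lt_or_ge i M with h | h
      · rw [hu (i + 1) (by omega)]; exact g2 i h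
      · rw [show i = M by omega, Function.update_self]; exact hs'

theorem gridSearch (hδ : 0 < δ) (hΔ : δ ≤ Δ) (hk : 3 ≤ k) {z : ℕ → ℝ} (L : ℕ) (N : ℕ)
    (hz : ∀ j < N, z j ∈ Icc (0:ℝ) 1) :
    Learn δ Δ k vA (fun _ => True) (N * L)
      (fun v (w : ℕ → ℝ) => ∀ j < N, w j ∈ Icc (z j) 1 ∧
        |cumVal v (w j) - min (cumVal v (z j) + 1 / 2) 1| ≤ Δ / 2 ^ L) := by
  induction N with
  | zero => exact Learn.pure (fun _ => 0) fun v hv hp j hj => by omega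
  | succ N ih =>
    rw [Nat.succ_mul]
    refine (ih fun j hj => hz j (by omega)).bind fun w => ?_
    have hzN := hz N (by omega)
    refine (search hδ hΔ hk le_rfl hzN.1 hzN.2 L).map
      (fun s => Function.update w N s)
      (fun v hv _ => by rw [(cumVal_isCum hδ hv).zero]; norm_num) ?_
    rintro v s hv ⟨_, g⟩ ⟨hs, hs'⟩ j hj
    rcases Nat.lt_or_ge j N with h | h
    · rw [Function.update_of_ne (by omega)]
      exact g j h
    · rw [show j = N by omega]
      simp only [Function.update_self]
      rw [(cumVal_isCum hδ hv).zero, sub_zero] at hs'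
      exact ⟨hs, hs'⟩

theorem explore (hδ : 0 < δ) (hΔ : δ ≤ Δ) (hk : 3 ≤ k) {η : ℝ} (hη : 0 < η)
    (hη1 : 4 * Δ * η ≤ 1) (L n M : ℕ) (hL : Δ / 2 ^ L ≤ δ * η / 2) (hn : 1 ≤ n) :
    Learn δ Δ k vA (fun _ => True) (L + (M * L + (n + 1) * L))
      (fun v (d : ℝ × (ℕ → ℝ) × (ℕ → ℝ)) =>
        Consistent (cumVal v) η (Δ / 2 ^ L) n M d.1 d.2.1 d.2.2) := by
  have hΔ0 : 0 < Δ := hδ.trans_le hΔ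
  have hstep1 : Learn δ Δ k vA (fun _ => True) L (fun v m => η ≤ m ∧ m ≤ 1 ∧
      |cumVal v m - 1 / 2| ≤ Δ / 2 ^ L ∧ cumVal v (m - η) ≤ 1 / 2) := by
    refine (search (a := 0) (y := 0) hδ hΔ hk le_rfl le_rfl zero_le_one L).map id
      (fun v hv _ => by rw [(cumVal_isCum hδ hv).zero]; norm_num) ?_
    rintro v m hv - ⟨hm, hm'⟩
    have hF := cumVal_isCum hδ hv
    rw [hF.zero, zero_add, sub_zero, min_eq_left (by norm_num)] at hm'
    have habs := abs_le.1 hm'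
    have h1 := hF.upper 0 m le_rfl hm.1 hm.2
    rw [hF.zero, sub_zero, sub_zero] at h1
    have h2 : δ * η ≤ Δ * η := by gcongr
    have h3 : η ≤ m := by
      have : Δ * η ≤ Δ * m := by linarith [habs.1]
      exact le_of_mul_le_mul_left this hΔ0
    refine ⟨h3, hm.2, hm', ?_⟩
    have h4 := hF.lower (m - η) m (by linarith) (by linarith) hm.2
    rw [sub_sub_cancel] at h4
    have : 0 < δ * η := by positivity
    simp only [id] at *
    linarith [habs.2]
  refine hstep1.bind fun m => Learn.of_exists ?_
  rintro _ _ ⟨_, hm1, hm2, _⟩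
  refine ((march (vA := vA) hδ hΔ hk (a := m - η) (m := m) (by linarith) (by linarith) hm2 L M).mono_pre
    (pre := fun v => True ∧ η ≤ m ∧ m ≤ 1 ∧
      |cumVal v m - 1 / 2| ≤ Δ / 2 ^ L ∧ cumVal v (m - η) ≤ 1 / 2)
    (fun v _ hp => hp.2.2.2.2)).bind fun y => ?_
  refine (gridSearch hδ hΔ hk (z := fun j => (j:ℝ) / n) L (n + 1) ?_).map
    (fun w => (m, y, w)) (fun _ _ _ => trivial) ?_
  · intro j hj
    have hn0 : (0:ℝ) < n := by exact_mod_cast hn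
    refine ⟨by positivity, ?_⟩
    rw [div_le_one hn0]
    exact_mod_cast Nat.lt_succ_iff.1 hj
  · rintro v w hv ⟨⟨-, g1, g2, g3, g4⟩, y1, y2, y3⟩ hw
    exact ⟨g1, g2, g3, y1, y2, y3, fun j hj => (hw j (by omega)).1,
      fun j hj => (hw j (by omega)).2⟩

theorem density_one_le (hδ : 0 < δ) {v : ℝ → ℝ} (hv : IsValueDensity δ Δ v) : 1 ≤ Δ := by
  have hF := cumVal_isCum hδ hv
  have := hF.upper 0 1 le_rfl zero_le_one le_rfl
  rw [hF.zero, hF.one] at this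
  linarith

theorem learn_good (hδ : 0 < δ) (hΔ : δ ≤ Δ) (hk : 3 ≤ k) (hA : IsValueDensity δ Δ vA)
    {η : ℝ} (hη : 0 < η)
    (hη1 : 4 * Δ * η ≤ 1) (L n M : ℕ) (hL : Δ / 2 ^ L ≤ δ * η / 2) (hn : 1 ≤ n)
    (hML : (M + 1) * (Δ / 2 ^ L) ≤ η) (hM : 1 ≤ M * (δ * η)) (hnη : 1 ≤ 4 * Δ * η * n) :
    Learn δ Δ k vA (fun _ => True) (L + (M * L + (n + 1) * L))
      (fun v (c : {c : Fin k → ℝ // ValidCuts k c}) => stackelbergValue k vA v -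
        pieceVal vA (altPiece k c (!(myopicBob k vA v 0 [] c))) ≤
          16 * (Δ / δ) * ((k + 1) * ((7 * Δ + Δ / δ + 3 + 4 * Δ ^ 2) * η))) := by
  have hΔ1 := density_one_le hδ hA
  have hΔ0 : 0 < Δ := by linarith
  have hκ : 0 < (7 * Δ + Δ / δ + 3 + 4 * Δ ^ 2) * η := by positivity
  have hfinal : ∀ d : ℝ × (ℕ → ℝ) × (ℕ → ℝ), ∃ c : {c : Fin k → ℝ // ValidCuts k c},
      ∀ v, IsValueDensity δ Δ v →
        Consistent (cumVal v) η (Δ / 2 ^ L) n M d.1 d.2.1 d.2.2 →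
        stackelbergValue k vA v -
          pieceVal vA (altPiece k c (!(myopicBob k vA v 0 [] c))) ≤
          16 * (Δ / δ) * ((k + 1) * ((7 * Δ + Δ / δ + 3 + 4 * Δ ^ 2) * η)) := by
    intro d
    by_cases hex : ∃ w, IsValueDensity δ Δ w ∧
        Consistent (cumVal w) η (Δ / 2 ^ L) n M d.1 d.2.1 d.2.2
    · obtain ⟨w, hw, hwd⟩ := hex
      obtain ⟨c, hc⟩ := exploit hδ hΔ hA hw (by omega : 1 ≤ k) hκ
      refine ⟨c, fun v hv hvd => hc v hv fun x hx => ?_⟩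
      have c1 := compare hδ hΔ hΔ1 hη hL hML hM hn hnη (cumVal_isCum hδ hw)
        (cumVal_isCum hδ hv) hwd hvd hx.1 hx.2
      have c2 := compare hδ hΔ hΔ1 hη hL hML hM hn hnη (cumVal_isCum hδ hv)
        (cumVal_isCum hδ hw) hvd hwd hx.1 hx.2
      rw [abs_le]
      constructor <;> linarith
    · exact ⟨⟨_, zeroCuts_valid k⟩, fun v hv hvd => absurd ⟨v, hv, hvd⟩ hex⟩
  choose f hf using hfinal
  exact (explore hδ hΔ hk hη hη1 L n M hL hn).map f (fun _ _ _ => trivial)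
    (fun v d hv _ hd => hf d v hv hd)

end LearnLemmas
set_option maxHeartbeats 1000000 in
/-- Numerical parameters of the strategy. -/
theorem params {δ Δ : ℝ} (hδ : 0 < δ) (hΔ : δ ≤ Δ) (hΔ1 : 1 ≤ Δ) :
    ∃ K : ℝ, 0 < K ∧ ∀ S : ℝ, 6 ≤ S → ∃ (η : ℝ) (L n M : ℕ), 0 < η ∧ 4 * Δ * η ≤ 1 ∧
      Δ / 2 ^ L ≤ δ * η / 2 ∧ 1 ≤ n ∧ (M + 1) * (Δ / 2 ^ L) ≤ η ∧ 1 ≤ M * (δ * η) ∧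
      1 ≤ 4 * Δ * η * n ∧ η * Real.sqrt S ≤ 1 ∧
      ((L + (M * L + (n + 1) * L) : ℕ) : ℝ) ≤ K * Real.sqrt S * Real.log S := by
  have hΔ0 : 0 < Δ := by linarith
  have hD : 1 ≤ Δ / δ := by rwa [one_le_div hδ]
  set B : ℝ := 24 * Δ ^ 3 / δ with hB
  have hB1 : 1 ≤ B := by
    have : B = 24 * Δ ^ 2 * (Δ / δ) := by rw [hB]; field_simp
    rw [this]
    have : 1 ≤ Δ ^ 2 := one_le_pow₀ hΔ1
    nlinarith
  have hlogB : 0 ≤ Real.log B := Real.log_nonneg hB1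
  have hl2 : 0 < Real.log 2 := Real.log_pos (by norm_num)
  set K2 : ℝ := (Real.log B + 2 * Real.log 2 + 1) / Real.log 2 + 1 with hK2
  have hK20 : 0 < K2 := by positivity
  refine ⟨20 * (Δ / δ) * K2, by positivity, fun S hS => ?_⟩
  set s := Real.sqrt S with hs
  have hS0 : 0 < S := by linarith
  have hs1 : 1 ≤ s := by rw [hs, Real.one_le_sqrt]; linarith
  have hlogS : 1 ≤ Real.log S := by
    rw [Real.le_log_iff_exp_le hS0]
    linarith [Real.exp_one_lt_d9]
  set n := ⌈s⌉₊ with hn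
  have n1 : s ≤ n := Nat.le_ceil s
  have n2 : (n:ℝ) < s + 1 := Nat.ceil_lt_add_one (by linarith)
  have nge : (1:ℝ) ≤ n := hs1.trans n1
  have n0 : (0:ℝ) < n := by linarith
  set η : ℝ := 1 / (4 * Δ * n) with hη
  have hη0 : 0 < η := by positivity
  set M := ⌈4 * Δ * n / δ⌉₊ with hM
  have M1 : 4 * Δ * n / δ ≤ M := Nat.le_ceil _
  have M2 : (M:ℝ) < 4 * Δ * n / δ + 1 := Nat.ceil_lt_add_one (by positivity)
  set L := ⌈Real.logb 2 (B * n ^ 2)⌉₊ with hL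
  have hBn : 1 ≤ B * n ^ 2 := by
    have : (1:ℝ) ≤ (n:ℝ) ^ 2 := one_le_pow₀ nge
    nlinarith
  have hBn0 : 0 < B * (n:ℝ) ^ 2 := by linarith
  have L0 : 0 ≤ Real.logb 2 (B * n ^ 2) := Real.logb_nonneg (by norm_num) hBn
  have L1 : Real.logb 2 (B * n ^ 2) ≤ L := Nat.le_ceil _
  have L2 : (L:ℝ) < Real.logb 2 (B * n ^ 2) + 1 := Nat.ceil_lt_add_one L0
  have L3 : B * n ^ 2 ≤ 2 ^ L := by
    rw [Real.logb_le_iff_le_rpow (by norm_num) hBn0, Real.rpow_natCast] at L1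
    exact L1
  have hDn : 1 ≤ Δ / δ * n := by nlinarith
  have hε : Δ / 2 ^ L ≤ δ / (24 * Δ ^ 2 * n ^ 2) := by
    calc Δ / 2 ^ L ≤ Δ / (B * n ^ 2) := by gcongr
      _ = δ / (24 * Δ ^ 2 * n ^ 2) := by rw [hB]; field_simp
  have hM3 : (M:ℝ) + 1 ≤ 6 * (Δ / δ * n) := by
    have : 4 * Δ * n / δ = 4 * (Δ / δ * n) := by ring
    linarith
  have hLK : (L:ℝ) ≤ K2 * Real.log S := by
    have e1 : Real.log n ≤ Real.log 2 + Real.log S / 2 := by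
      have : (n:ℝ) ≤ 2 * s := by linarith
      calc Real.log n ≤ Real.log (2 * s) := Real.log_le_log n0 this
        _ = Real.log 2 + Real.log s := Real.log_mul (by norm_num) (by linarith)
        _ = _ := by rw [hs, Real.log_sqrt hS0.le]
    have e2 : Real.logb 2 (B * n ^ 2) = (Real.log B + 2 * Real.log n) / Real.log 2 := by
      rw [Real.logb, Real.log_mul (by linarith) (by positivity), Real.log_pow]
      norm_num
    have e3 : (Real.log B + 2 * Real.log n) / Real.log 2 ≤
        (Real.log B + 2 * Real.log 2 + 1) * Real.log S / Real.log 2 := by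
      gcongr
      nlinarith
    have e4 : K2 * Real.log S =
        (Real.log B + 2 * Real.log 2 + 1) * Real.log S / Real.log 2 + Real.log S := by
      rw [hK2]; ring
    linarith
  refine ⟨η, L, n, M, hη0, ?_, ?_, by exact_mod_cast nge, ?_, ?_, ?_, ?_, ?_⟩
  · rw [hη]
    have : 4 * Δ * (1 / (4 * Δ * n)) = 1 / (n:ℝ) := by field_simp
    rw [this, div_le_one n0]
    exact nge
  · refine hε.trans ?_
    have : δ * η / 2 = δ / (8 * Δ * n) := by rw [hη]; field_simp; norm_num
    rw [this]
    have : 8 * Δ * n ≤ 24 * Δ ^ 2 * (n:ℝ) ^ 2 := by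
      have : 1 ≤ Δ * n := by nlinarith
      nlinarith
    gcongr
  · calc ((M:ℝ) + 1) * (Δ / 2 ^ L)
        ≤ 6 * (Δ / δ * n) * (δ / (24 * Δ ^ 2 * n ^ 2)) := by gcongr
      _ = η := by rw [hη]; field_simp; norm_num
  · calc (1:ℝ) = 4 * Δ * n / δ * (δ * η) := by rw [hη]; field_simp
      _ ≤ M * (δ * η) := by gcongr
  · rw [hη]
    apply le_of_eq
    field_simp
  · calc η * s ≤ η * n := by gcongr
      _ = 1 / (4 * Δ) := by rw [hη]; field_simp
      _ ≤ 1 := by rw [div_le_one (by positivity)]; linarith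
  · push_cast
    have e : (L:ℝ) + (M * L + (n + 1) * L) = (M + 1 + 1 + n) * L := by ring
    rw [e]
    have hcount : (M:ℝ) + 1 + 1 + n ≤ 20 * (Δ / δ) * s := by
      have h1 : Δ / δ * n ≤ Δ / δ * (2 * s) := by gcongr; linarith
      have h2 : s ≤ Δ / δ * s := le_mul_of_one_le_left (by linarith) hD
      nlinarith
    calc ((M:ℝ) + 1 + 1 + n) * L ≤ (20 * (Δ / δ) * s) * (K2 * Real.log S) := by
          gcongr
      _ = 20 * (Δ / δ) * K2 * s * Real.log S := by ring

/-- `k ≥ 3` cuts, myopic Bob, upper bound: for all `0 < δ ≤ Δ` there is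
`C > 0` such that for every `k ≥ 3` and every Alice value density there is a deterministic
Alice strategy whose Stackelberg regret against the myopic Bob is at most
`C·√(T·k)·log(T·k)` for every Bob value density and every horizon `T ≥ 2`. -/
theorem k_cut_myopic_upper (δ Δ : ℝ) (hδ : 0 < δ) (hδΔ : δ ≤ Δ) :
    ∃ C : ℝ, 0 < C ∧
      ∀ k : ℕ, 3 ≤ k →
        ∀ vA : ℝ → ℝ, IsValueDensity δ Δ vA →
          ∃ SA : AliceStrategy k, AliceValid k SA ∧
            ∀ vB : ℝ → ℝ, IsValueDensity δ Δ vB →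
              ∀ T : ℕ, 2 ≤ T →
                aliceRegret k vA vB SA (myopicBob k vA vB) T ≤
                  C * Real.sqrt ((T : ℝ) * k) * Real.log ((T : ℝ) * k) := by
  by_cases hΔ1 : 1 ≤ Δ
  swap
  · refine ⟨1, one_pos, fun k hk vA hA => ?_⟩
    exact absurd (density_one_le hδ hA) hΔ1
  obtain ⟨K, hK, hpar⟩ := params hδ hδΔ hΔ1
  have hΔ0 : 0 < Δ := by linarith
  set K' : ℝ := 16 * (Δ / δ) * (7 * Δ + Δ / δ + 3 + 4 * Δ ^ 2) with hK'
  have hK'0 : 0 < K' := by positivity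
  refine ⟨K + 2 * K', by positivity, fun k hk vA hA => ?_⟩
  have hk0 : (3:ℝ) ≤ k := by exact_mod_cast hk
  have hS6 : ∀ T : ℕ, 2 ≤ T → (6:ℝ) ≤ (T:ℝ) * k := by
    intro T hT
    have : (2:ℝ) ≤ T := by exact_mod_cast hT
    nlinarith
  -- for each horizon a good query tree
  have htree : ∀ T : ℕ, ∃ t : QTree k {c : Fin k → ℝ // ValidCuts k c}, 2 ≤ T →
      ∃ (N : ℕ) (η : ℝ), 0 < η ∧ η * Real.sqrt ((T:ℝ) * k) ≤ 1 ∧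
        (N:ℝ) ≤ K * Real.sqrt ((T:ℝ) * k) * Real.log ((T:ℝ) * k) ∧
        ∀ v, IsValueDensity δ Δ v → QTree.steps (myopicBob k vA v 0 []) t ≤ N ∧
          ∀ c, QTree.result (myopicBob k vA v 0 []) t = c → stackelbergValue k vA v -
            pieceVal vA (altPiece k c (!(myopicBob k vA v 0 [] c))) ≤ K' * ((k + 1) * η) := by
    intro T
    by_cases hT : 2 ≤ T
    · obtain ⟨η, L, n, M, p1, p2, p3, p4, p5, p6, p7, p8, p9⟩ := hpar _ (hS6 T hT)
      obtain ⟨t, ht⟩ := learn_good hδ hδΔ hk hA p1 p2 L n M p3 p4 p5 p6 p7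
      refine ⟨t, fun _ => ⟨_, η, p1, p8, p9, fun v hv => ?_⟩⟩
      obtain ⟨h1, h2⟩ := ht v hv trivial
      refine ⟨h1, ?_⟩
      rintro c rfl
      refine h2.trans (le_of_eq ?_)
      rw [hK']
      ring
    · exact ⟨.ret ⟨_, zeroCuts_valid k⟩, fun h => absurd h hT⟩
  choose tr htr using htree
  refine ⟨treeStrategy k tr, fun T h => Subtype.property _, fun vB hB T hT => ?_⟩
  obtain ⟨N, η, hη, hηs, hN, hgood⟩ := htr T hT
  obtain ⟨g1, g2⟩ := hgood vB hB
  have hreg := treeStrategy_regret hδ hA hB k tr T (by positivity) g1 g2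
  have hS := hS6 T hT
  set S : ℝ := (T:ℝ) * k with hSdef
  have hlogS : 1 ≤ Real.log S := by
    rw [Real.le_log_iff_exp_le (by linarith)]
    linarith [Real.exp_one_lt_d9]
  have hs0 : 0 ≤ Real.sqrt S := Real.sqrt_nonneg S
  have hss : Real.sqrt S * Real.sqrt S = S := Real.mul_self_sqrt (by linarith)
  have hT0 : (0:ℝ) ≤ T := Nat.cast_nonneg T
  have hloss : (T:ℝ) * (K' * ((k + 1) * η)) ≤ 2 * K' * Real.sqrt S := by
    have a1 : (T:ℝ) * (k + 1) ≤ 2 * S := by rw [hSdef]; nlinarith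
    calc (T:ℝ) * (K' * ((k + 1) * η)) = K' * η * (T * (k + 1)) := by ring
      _ ≤ K' * η * (2 * S) := by gcongr
      _ = 2 * K' * Real.sqrt S * (η * Real.sqrt S) := by linear_combination (-(2 * K' * η)) * hss
      _ ≤ 2 * K' * Real.sqrt S * 1 := by gcongr
      _ = 2 * K' * Real.sqrt S := mul_one _
  have hloss2 : 2 * K' * Real.sqrt S ≤ 2 * K' * Real.sqrt S * Real.log S :=
    le_mul_of_one_le_right (by positivity) hlogS
  have : (K + 2 * K') * Real.sqrt S * Real.log S =
      K * Real.sqrt S * Real.log S + 2 * K' * Real.sqrt S * Real.log S := by ring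
  linarith

end
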